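/- Let K be a separably closed field and let E be a finite Galois extension of the field K((z)) of formal Laurent series over K, of degree m, where m is invertible in K. Then there exists u ∈ E such that u^m ∈ K((z)) and E is generated by u over K((z)), i.e., E = K((z))(u). -/

import Mathlib

/-!
The argument works for the fraction field `F` of any complete discrete valuation ring `A` with
separably closed residue field; here `A = K⟦z⟧`. By Hensel's lemma the integral closure `B` of `A`
in `E` has no nontrivial idempotents modulo the maximal ideal of `A`, hence it is again a discrete
valuation ring. Its residue field is purely inseparable over that of `A`, so the Galois group `G`
acts trivially on it, and for a uniformizer `ϖ` of `B` the map `g ↦ g ϖ / ϖ` modulo the maximal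
ideal is a character of `G`. The elements of its kernel multiply every `b : B` by an element
congruent to `1`; averaging over the kernel, whose order is invertible, shows that it acts
trivially on `B`. So `G` embeds into the units of a field and is cyclic. Finally `F` contains a
primitive root of unity of order `|G|` by Hensel's lemma, and Kummer theory applies.
-/

open IsLocalRing
open scoped PowerSeries

section Henselian

open Polynomial

variable {R : Type*} [CommRing R]

theorem exists_isIdempotentElem_mk_eq (I : Ideal R) [HenselianRing R I] {e : R ⧸ I}
    (he : IsIdempotentElem e) : ∃ a : R, IsIdempotentElem a ∧ Ideal.Quotient.mk I a = e := by
  obtain ⟨e, rfl⟩ := Ideal.Quotient.mk_surjective e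
  have root_mem : (X ^ 2 - X : R[X]).eval e ∈ I := by
    rw [← Ideal.Quotient.eq_zero_iff_mem]
    simp [pow_two, he.eq]
  have eval_derivative : (X ^ 2 - X : R[X]).derivative.eval e = 2 * e - 1 := by
    simp [one_add_one_eq_two]
  have simple_root : IsUnit (Ideal.Quotient.mk I ((X ^ 2 - X : R[X]).derivative.eval e)) := by
    rw [eval_derivative]
    refine IsUnit.of_mul_eq_one (Ideal.Quotient.mk I (2 * e - 1)) ?_
    simp only [map_sub, map_mul, map_ofNat, map_one]
    linear_combination 4 * he.eq
  obtain ⟨a, ha, hae⟩ :=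
    HenselianRing.is_henselian (X ^ 2 - X) (by monicity!) e root_mem simple_root
  have ha' : a ^ 2 - a = 0 := by simpa using ha
  exact ⟨a, by rw [IsIdempotentElem, ← pow_two, sub_eq_zero.1 ha'], Ideal.Quotient.eq.2 hae⟩

theorem isLocalRing_of_forall_isIdempotentElem [IsArtinianRing R] [Nontrivial R]
    (h : ∀ e : R, IsIdempotentElem e → e = 0 ∨ e = 1) : IsLocalRing R := by
  have : PreconnectedSpace (PrimeSpectrum R) := preconnectedSpace_iff_clopen.2 fun s hs ↦ by
    obtain ⟨e, he, rfl⟩ := PrimeSpectrum.isClopen_iff.1 hs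
    rcases h e he with rfl | rfl <;> simp
  have : Subsingleton (PrimeSpectrum R) := PreconnectedSpace.trivial_of_discrete
  have : Subsingleton (MaximalSpectrum R) :=
    MaximalSpectrum.toPrimeSpectrum_injective.subsingleton
  exact .of_singleton_maximalSpectrum

theorem isLocalRing_of_henselianRing [IsDomain R] (I : Ideal R) [HenselianRing R I]
    [IsArtinianRing (R ⧸ I)] : IsLocalRing R := by
  have : IsLocalHom (Ideal.Quotient.mk I) := isLocalHom_of_le_jacobson_bot I HenselianRing.jac
  have : Nontrivial (R ⧸ I) := Ideal.Quotient.nontrivial_iff.2 fun hI ↦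
    bot_ne_top (Ideal.jacobson_eq_top_iff.1 (top_le_iff.1 (hI ▸ HenselianRing.jac (I := I))))
  have : IsLocalRing (R ⧸ I) := isLocalRing_of_forall_isIdempotentElem fun e he ↦ by
    obtain ⟨a, ha, rfl⟩ := exists_isIdempotentElem_mk_eq I he
    rcases IsIdempotentElem.iff_eq_zero_or_one.1 ha with rfl | rfl <;> simp
  exact RingHom.domain_isLocalRing (Ideal.Quotient.mk I)

theorem exists_isPrimitiveRoot_of_henselianRing [IsLocalRing R] [HenselianRing R (maximalIdeal R)]
    [IsSepClosed (ResidueField R)] {n : ℕ} (hn : IsUnit (n : R)) :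
    ∃ ζ : R, IsPrimitiveRoot ζ n := by
  have hn' : (n : ResidueField R) ≠ 0 := by simpa using (hn.map (residue R)).ne_zero
  have : NeZero (n : ResidueField R) := ⟨hn'⟩
  have n_ne_zero : n ≠ 0 := ne_of_apply_ne (Nat.cast : ℕ → ResidueField R) (by simpa using hn')
  obtain ⟨ζ, hζ⟩ := HasEnoughRootsOfUnity.exists_primitiveRoot (ResidueField R) n
  obtain ⟨a, rfl⟩ := residue_surjective ζ
  have root_mem : (X ^ n - 1 : R[X]).eval a ∈ maximalIdeal R := by
    rw [← residue_eq_zero_iff]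
    simp [hζ.pow_eq_one]
  have eval_derivative : (X ^ n - 1 : R[X]).derivative.eval a = n * a ^ (n - 1) := by
    simp [derivative_X_pow]
  have simple_root : IsUnit (residue R ((X ^ n - 1 : R[X]).derivative.eval a)) := by
    rw [eval_derivative, map_mul, map_pow, map_natCast]
    exact hn'.isUnit.mul ((hζ.isUnit n_ne_zero).pow _)
  obtain ⟨ζ, hζ_root, hζ_sub⟩ :=
    HenselianRing.is_henselian (X ^ n - 1) (monic_X_pow_sub_C 1 n_ne_zero) a root_mem simple_root
  have residue_eq : residue R ζ = residue R a := Ideal.Quotient.eq.2 hζ_sub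
  refine ⟨ζ, ⟨?_, fun l hl ↦ hζ.dvd_of_pow_eq_one l ?_⟩⟩
  · simpa [sub_eq_zero] using hζ_root
  · rw [← residue_eq, ← map_pow, hl, map_one]

end Henselian

section FiniteAlgebra

theorem isPrecomplete_of_finite {A M : Type*} [CommRing A] [AddCommGroup M] [Module A M]
    (I : Ideal A) [IsPrecomplete I A] [Module.Finite A M] : IsPrecomplete I M := by
  rw [← AdicCompletion.of_surjective_iff]
  intro x
  obtain ⟨t, rfl⟩ := AdicCompletion.ofTensorProduct_surjective_of_finite I M x
  induction t with
  | zero => exact ⟨0, by simp⟩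
  | add s t hs ht =>
    obtain ⟨y, hy⟩ := hs
    obtain ⟨z, hz⟩ := ht
    exact ⟨y + z, by rw [map_add, map_add, hy, hz]⟩
  | tmul r y =>
    obtain ⟨a, rfl⟩ := AdicCompletion.of_surjective I A r
    refine ⟨a • y, ?_⟩
    rw [AdicCompletion.ofTensorProduct_tmul]
    rfl

variable (A B : Type*) [CommRing A] [CommRing B] [IsLocalRing A] [Algebra A B]

theorem map_maximalIdeal_le_jacobson_bot [Algebra.IsIntegral A B] :
    (maximalIdeal A).map (algebraMap A B) ≤ Ideal.jacobson ⊥ := by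
  refine le_sInf fun J ⟨_, hJ⟩ ↦ ?_
  rw [Ideal.map_le_iff_le_comap]
  exact (eq_maximalIdeal (Ideal.IsMaximal.under A J)).ge

theorem isAdicComplete_map_maximalIdeal [IsNoetherianRing A] [IsAdicComplete (maximalIdeal A) A]
    [Module.Finite A B] : IsAdicComplete ((maximalIdeal A).map (algebraMap A B)) B where
  toIsHausdorff :=
    have : IsNoetherianRing B := IsNoetherianRing.of_finite A B
    .of_le_jacobson _ _ (map_maximalIdeal_le_jacobson_bot A B)
  toIsPrecomplete := IsPrecomplete.map_algebraMap_iff.2 (isPrecomplete_of_finite (maximalIdeal A))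

instance isArtinianRing_quotient_map_maximalIdeal [Module.Finite A B] :
    IsArtinianRing (B ⧸ (maximalIdeal A).map (algebraMap A B)) :=
  have : Module.Finite (A ⧸ maximalIdeal A) (B ⧸ (maximalIdeal A).map (algebraMap A B)) :=
    .of_restrictScalars_finite A _ _
  letI := Ideal.Quotient.field (maximalIdeal A)
  .of_finite (A ⧸ maximalIdeal A) _

theorem isLocalRing_of_finite [IsNoetherianRing A] [IsAdicComplete (maximalIdeal A) A]
    [IsDomain B] [Module.Finite A B] : IsLocalRing B :=
  have := isAdicComplete_map_maximalIdeal A B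
  isLocalRing_of_henselianRing ((maximalIdeal A).map (algebraMap A B))

end FiniteAlgebra

theorem isDiscreteValuationRing_integralClosure (A F E : Type*) [CommRing A] [IsDomain A]
    [IsDiscreteValuationRing A] [IsAdicComplete (maximalIdeal A) A] [Field F] [Algebra A F]
    [IsFractionRing A F] [Field E] [Algebra F E] [Algebra A E] [IsScalarTower A F E]
    [FiniteDimensional F E] [Algebra.IsSeparable F E] :
    IsDiscreteValuationRing (integralClosure A E) := by
  have : Module.Finite A (integralClosure A E) := IsIntegralClosure.finite A F E _
  have isDedekindDomain : IsDedekindDomain (integralClosure A E) :=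
    integralClosure.isDedekindDomain A F E
  have : IsLocalRing (integralClosure A E) := isLocalRing_of_finite A _
  have : FaithfulSMul A E := .trans A F E
  have not_isField : ¬ IsField (integralClosure A E) := fun h ↦
    IsDiscreteValuationRing.not_isField A
      (isField_of_isIntegral_of_isField (FaithfulSMul.algebraMap_injective A _) h)
  exact ((IsDiscreteValuationRing.TFAE _ not_isField).out 0 2).2 isDedekindDomain

theorem smul_residueField_eq_self {A B G : Type*} [CommRing A] [CommRing B] [IsLocalRing A]
    [IsLocalRing B] [Algebra A B] [Algebra.IsIntegral A B] [IsLocalHom (algebraMap A B)]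
    [IsSepClosed (ResidueField A)] [Group G] [MulSemiringAction G B] [SMulCommClass G A B]
    (g : G) (x : ResidueField B) : g • x = x := by
  have : Algebra.IsIntegral A (ResidueField B) :=
    .of_surjective (IsScalarTower.toAlgHom A B (ResidueField B)) residue_surjective
  have : Algebra.IsIntegral (ResidueField A) (ResidueField B) := .tower_top (R := A)
  have : SMulCommClass G (ResidueField A) (ResidueField B) := ⟨fun g a b ↦ by
    obtain ⟨a, rfl⟩ := residue_surjective a
    obtain ⟨b, rfl⟩ := residue_surjective b
    simp only [Algebra.smul_def, ResidueField.algebraMap_residue, ← map_mul,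
      ← ResidueField.residue_smul, smul_mul', smul_algebraMap]⟩
  exact DFunLike.congr_fun (Subsingleton.elim
    (MulSemiringAction.toAlgHom (ResidueField A) (ResidueField B) g) (.id _ _)) x

theorem smul_eq_self_of_smul_eq_mul {B G : Type*} [CommRing B] [IsLocalRing B] [Group G] [Finite G]
    [DistribMulAction G B] (hG : IsUnit (Nat.card G : B))
    (h : ∀ (g : G) (b : B), ∃ v, residue B v = 1 ∧ g • b = v * b) (g : G) (b : B) : g • b = b := by
  cases nonempty_fintype G
  choose v residue_v smul_eq using h
  set c := g • b - b
  have sum_smul : ∑ x : G, x • c = 0 := by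
    simp only [c, smul_sub, Finset.sum_sub_distrib, sub_eq_zero, ← mul_smul]
    exact Fintype.sum_equiv (Equiv.mulRight g) _ _ fun _ ↦ rfl
  have isUnit_sum : IsUnit (∑ x : G, v x c) := by
    rw [← residue_ne_zero_iff_isUnit, map_sum]
    simpa [residue_v] using (hG.map (residue B)).ne_zero
  rw [Fintype.sum_congr _ _ fun x ↦ smul_eq x c, ← Finset.sum_mul] at sum_smul
  exact sub_eq_zero.1 (isUnit_sum.mul_right_eq_zero.1 sum_smul)

section Uniformizer

variable {B G : Type*} [CommRing B] [IsDomain B] [IsDiscreteValuationRing B] [Group G]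
  [MulSemiringAction G B] {ϖ : B}

theorem exists_units_smul_eq_mul (hϖ : Irreducible ϖ) (g : G) : ∃ u : Bˣ, g • ϖ = u * ϖ := by
  have : Irreducible (g • ϖ) :=
    (MulEquiv.irreducible_iff (MulSemiringAction.toRingEquiv G B g)).2 hϖ
  obtain ⟨u, hu⟩ := IsDiscreteValuationRing.associated_of_irreducible B hϖ this
  exact ⟨u, by rw [← hu, mul_comm]⟩

/-- The unit `g ϖ / ϖ` by which `g` moves a uniformizer `ϖ`. -/
noncomputable def uniformizerCocycle (hϖ : Irreducible ϖ) (g : G) : Bˣ :=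
  (exists_units_smul_eq_mul hϖ g).choose

theorem smul_eq_uniformizerCocycle_mul (hϖ : Irreducible ϖ) (g : G) :
    g • ϖ = uniformizerCocycle hϖ g * ϖ :=
  (exists_units_smul_eq_mul hϖ g).choose_spec

theorem uniformizerCocycle_one (hϖ : Irreducible ϖ) :
    (uniformizerCocycle hϖ (1 : G) : B) = 1 := by
  apply mul_right_cancel₀ hϖ.ne_zero
  rw [← smul_eq_uniformizerCocycle_mul, one_smul, one_mul]

theorem uniformizerCocycle_mul (hϖ : Irreducible ϖ) (g h : G) :
    (uniformizerCocycle hϖ (g * h) : B) =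
      g • (uniformizerCocycle hϖ h : B) * uniformizerCocycle hϖ g := by
  apply mul_right_cancel₀ hϖ.ne_zero
  rw [← smul_eq_uniformizerCocycle_mul, mul_smul, smul_eq_uniformizerCocycle_mul hϖ h, smul_mul',
    smul_eq_uniformizerCocycle_mul hϖ g, mul_assoc]

/-- The character `g ↦ g ϖ / ϖ` of a group acting trivially on the residue field, with values in
the residue field. -/
noncomputable def tameCharacter (hϖ : Irreducible ϖ)
    (htriv : ∀ (g : G) (x : ResidueField B), g • x = x) : G →* ResidueField B where
  toFun g := residue B (uniformizerCocycle hϖ g)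
  map_one' := by rw [uniformizerCocycle_one, map_one]
  map_mul' g h := by
    rw [uniformizerCocycle_mul, map_mul, ResidueField.residue_smul, htriv, mul_comm]

theorem exists_smul_eq_mul_of_tameCharacter_eq_one (hϖ : Irreducible ϖ)
    (htriv : ∀ (g : G) (x : ResidueField B), g • x = x) {g : G}
    (hg : tameCharacter hϖ htriv g = 1) (b : B) : ∃ v, residue B v = 1 ∧ g • b = v * b := by
  rcases eq_or_ne b 0 with rfl | hb
  · exact ⟨1, map_one _, by simp⟩
  obtain ⟨k, w, rfl⟩ := IsDiscreteValuationRing.eq_unit_mul_pow_irreducible hb hϖ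
  have hg' : residue B (uniformizerCocycle hϖ g) = 1 := hg
  refine ⟨g • (w : B) * ↑w⁻¹ * (uniformizerCocycle hϖ g : B) ^ k, ?_, ?_⟩
  · rw [map_mul, map_mul, map_pow, hg', one_pow, mul_one, ResidueField.residue_smul, htriv,
      ← map_mul, Units.mul_inv, map_one]
  · rw [smul_mul', smul_pow', smul_eq_uniformizerCocycle_mul hϖ, mul_pow]
    linear_combination (-(g • (w : B)) * uniformizerCocycle hϖ g ^ k * ϖ ^ k) * w.inv_mul

theorem tameCharacter_injective [Finite G] [FaithfulSMul G B] (hG : IsUnit (Nat.card G : B))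
    (hϖ : Irreducible ϖ) (htriv : ∀ (g : G) (x : ResidueField B), g • x = x) :
    Function.Injective (tameCharacter hϖ htriv) := by
  have isUnit_card_ker : IsUnit (Nat.card (tameCharacter hϖ htriv).ker : B) :=
    isUnit_of_dvd_unit (Nat.cast_dvd_cast (Subgroup.card_subgroup_dvd_card _)) hG
  refine (injective_iff_map_eq_one _).2 fun g hg ↦ ?_
  refine FaithfulSMul.eq_of_smul_eq_smul fun b : B ↦ ?_
  rw [one_smul]
  exact smul_eq_self_of_smul_eq_mul isUnit_card_ker
    (fun x ↦ exists_smul_eq_mul_of_tameCharacter_eq_one hϖ htriv x.2)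
    (⟨g, hg⟩ : (tameCharacter hϖ htriv).ker) b

theorem isCyclic_of_smul_residueField_eq_self [Finite G] [FaithfulSMul G B]
    (hG : IsUnit (Nat.card G : B)) (htriv : ∀ (g : G) (x : ResidueField B), g • x = x) :
    IsCyclic G :=
  have ⟨_, hϖ⟩ := IsDiscreteValuationRing.exists_irreducible B
  isCyclic_of_injective_ringHom _ (tameCharacter_injective hG hϖ htriv)

end Uniformizer

section CompleteDVR

variable {A F E : Type*} [CommRing A] [IsDomain A] [IsDiscreteValuationRing A]
  [IsAdicComplete (maximalIdeal A) A] [IsSepClosed (ResidueField A)]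
  [Field F] [Algebra A F] [IsFractionRing A F] [Field E] [Algebra F E]
  [FiniteDimensional F E] [IsGalois F E]

variable (A F E) in
theorem isCyclic_gal_of_isUnit_finrank [Algebra A E] [IsScalarTower A F E]
    (h : IsUnit (Module.finrank F E : A)) : IsCyclic Gal(E/F) := by
  have := isDiscreteValuationRing_integralClosure A F E
  have := integralClosure.isFractionRing_of_finite_extension (A := A) F E
  have : SMulCommClass Gal(E/F) A E := ⟨fun g a e ↦ by
    rw [← algebraMap_smul F a e, ← algebraMap_smul F a (g • e), smul_comm]⟩
  have : FaithfulSMul A E := .trans A F E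
  have := IsGaloisGroup.of_isFractionRing Gal(E/F) A (integralClosure A E) F E
  have : FaithfulSMul Gal(E/F) (integralClosure A E) := IsGaloisGroup.faithful A
  have isUnit_card : IsUnit (Nat.card Gal(E/F) : integralClosure A E) := by
    rw [IsGalois.card_aut_eq_finrank]
    simpa using h.map (algebraMap A (integralClosure A E))
  exact isCyclic_of_smul_residueField_eq_self isUnit_card (smul_residueField_eq_self (A := A))

variable (A) in
theorem stmt_16_general (m : ℕ) (hmu : IsUnit (m : A)) (hdeg : Module.finrank F E = m) :
    ∃ u : E, (∃ v : F, algebraMap F E v = u ^ m) ∧ IntermediateField.adjoin F {u} = ⊤ := by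
  let _ : Algebra A E := Algebra.compHom E (algebraMap A F)
  have : IsScalarTower A F E := .of_algebraMap_eq' rfl
  subst hdeg
  have := isCyclic_gal_of_isUnit_finrank A F E hmu
  obtain ⟨ζ, hζ⟩ := exists_isPrimitiveRoot_of_henselianRing hmu
  have hζF := hζ.map_of_injective (IsFractionRing.injective A F)
  exact exists_root_adjoin_eq_top_of_isCyclic F E
    ⟨_, (mem_primitiveRoots Module.finrank_pos).2 hζF⟩

end CompleteDVR

theorem isSepClosed_of_ringEquiv {k l : Type*} [Field k] [Field l] [IsSepClosed k] (e : k ≃+* l) :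
    IsSepClosed l := by
  refine ⟨fun p hp ↦ ?_⟩
  have := (IsSepClosed.splits_of_separable _ (hp.map (f := e.symm.toRingHom))).map e.toRingHom
  simpa [Polynomial.map_map] using this

instance isAdicComplete_maximalIdeal_powerSeries (K : Type*) [Field K] :
    IsAdicComplete (maximalIdeal K⟦X⟧) K⟦X⟧ := by
  rw [PowerSeries.maximalIdeal_eq_span_X]
  infer_instance

instance isSepClosed_residueField_powerSeries (K : Type*) [Field K] [IsSepClosed K] :
    IsSepClosed (ResidueField K⟦X⟧) :=
  isSepClosed_of_ringEquiv PowerSeries.residueFieldOfPowerSeries.symm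

theorem stmt_16 (K : Type*) [Field K] [IsSepClosed K]
    (E : Type*) [Field E] [Algebra (LaurentSeries K) E]
    [FiniteDimensional (LaurentSeries K) E] [IsGalois (LaurentSeries K) E]
    (m : ℕ) (hm : 0 < m) (hmu : IsUnit (m : K))
    (hdeg : Module.finrank (LaurentSeries K) E = m) :
    ∃ u : E, (∃ v : LaurentSeries K, algebraMap (LaurentSeries K) E v = u ^ m) ∧
      IntermediateField.adjoin (LaurentSeries K) ({u} : Set E) = ⊤ :=
  stmt_16_general K⟦X⟧ m (by simpa using hmu.map (PowerSeries.C (R := K))) hdeg
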